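/- For every flow network, every feasible flow x ∈ X, every budget Γ ∈ ℕ, and every attack μ with μ_{e_ts} = 0 and Σ_{e∈E} μ_e ≤ Γ, one has M(x, μ) ≥ M(x, 0) − Σ_{e : μ_e = 1} x_e ≥ M(x, 0) − Γ · max_{e ∈ E \ {e_ts}} U_e, where 0 denotes the attack with no attacked edges. Consequently, the maximum loss in the administrator's objective value due to adversarial attacks with budget Γ is bounded by Γ times the maximum edge capacity. -/

import Mathlib

attribute [local instance] Classical.propDecidable

/-- A flow network: a finite directed graph with node set `V`, edge set `E ⊆ V × V`,
source `s`, terminal `t` with `s ≠ t`, an artificial edge `(t, s) ∈ E`, nonnegative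
capacities `U` and nonnegative unit routing costs `p` with `p (t, s) = 0`. -/
structure FlowNetwork where
  V : Type
  fintypeV : Fintype V
  E : Finset (V × V)
  s : V
  t : V
  s_ne_t : s ≠ t
  ts_mem : (t, s) ∈ E
  U : V × V → ℝ
  U_nonneg : ∀ e, 0 ≤ U e
  p : V × V → ℝ
  p_nonneg : ∀ e, 0 ≤ p e
  p_ts : p (t, s) = 0

attribute [instance] FlowNetwork.fintypeV

namespace FlowNetwork

variable (N : FlowNetwork)

/-- Sum of a function over the edges entering node `v`. -/
noncomputable def inSum (y : N.V × N.V → ℝ) (v : N.V) : ℝ :=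
  ∑ e ∈ N.E.filter (fun e => e.2 = v), y e

/-- Sum of a function over the edges leaving node `v`. -/
noncomputable def outSum (y : N.V × N.V → ℝ) (v : N.V) : ℝ :=
  ∑ e ∈ N.E.filter (fun e => e.1 = v), y e

/-- A feasible flow: nonnegative, conserved at every node other than `s`,
and capacity-feasible on every edge other than the artificial edge `(t, s)`. -/
def Feasible (x : N.V × N.V → ℝ) : Prop :=
  (∀ e, 0 ≤ x e) ∧
  (∀ v, v ≠ N.s → N.inSum x v = N.outSum x v) ∧
  (∀ e ∈ N.E, e ≠ (N.t, N.s) → x e ≤ N.U e)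

/-- `Λ_u`: the set of edges lying on some simple directed path from `u` to `t`. -/
def lambdaSet (u : N.V) : Set (N.V × N.V) :=
  {e | ∃ l : List N.V, l.Chain' (fun a b => (a, b) ∈ N.E) ∧ l.Nodup ∧
    l.head? = some u ∧ l.getLast? = some N.t ∧ e ∈ l.zip l.tail}

/-- `ρ_e`: the set of edges `e' = (u, v) ∈ E` such that `e ∈ Λ_u`. -/
def rho (e : N.V × N.V) : Set (N.V × N.V) :=
  {e' | e' ∈ N.E ∧ e ∈ N.lambdaSet e'.1}

/-- `σ_μ`: the set of tails of the edges attacked by `μ`. -/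
def sigmaSet (μ : N.V × N.V → ℝ) : Set N.V :=
  {u | ∃ w, (u, w) ∈ N.E ∧ μ (u, w) = 1}

/-- `Λ_{σ_μ}`: the union of `Λ_u` over all tails `u` of attacked edges. -/
def lambdaSigma (μ : N.V × N.V → ℝ) : Set (N.V × N.V) :=
  ⋃ u ∈ N.sigmaSet μ, N.lambdaSet u

/-- The set of objective values of feasible points of the LP defining `M(x, μ)`. -/
def MSet (x μ : N.V × N.V → ℝ) : Set ℝ :=
  {r | ∃ y z : N.V × N.V → ℝ,
    (∀ e ∈ N.E, 0 ≤ y e) ∧ (∀ e ∈ N.E, 0 ≤ z e) ∧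
    (∀ v, v ≠ N.s → N.outSum y v ≤ N.inSum y v) ∧
    (∀ e ∈ N.E, e ∉ N.lambdaSigma μ → y e ≤ x e) ∧
    (∀ e ∈ N.E, e ∈ N.lambdaSigma μ → y e ≤ (1 - μ e) * N.U e) ∧
    (∀ e ∈ N.E, e ∈ N.lambdaSigma μ → y e - x e ≤ z e) ∧
    r = y (N.t, N.s) - ∑ e ∈ N.E, N.p e * z e - ∑ e ∈ N.E, N.p e * x e}

/-- `M(x, μ)`: the adaptive value of the flow `x` under the attack `μ`. -/
noncomputable def MVal (x μ : N.V × N.V → ℝ) : ℝ := sSup (N.MSet x μ)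

theorem aux_inSum_sub (N : FlowNetwork) (a b : N.V × N.V → ℝ) (v : N.V) :
    N.inSum (fun e => a e - b e) v = N.inSum a v - N.inSum b v := by
  simp [inSum, Finset.sum_sub_distrib]

theorem aux_outSum_sub (N : FlowNetwork) (a b : N.V × N.V → ℝ) (v : N.V) :
    N.outSum (fun e => a e - b e) v = N.outSum a v - N.outSum b v := by
  simp [outSum, Finset.sum_sub_distrib]

theorem aux_inSum_single (N : FlowNetwork) (e0 : N.V × N.V) (he : e0 ∈ N.E) (c : ℝ) (v : N.V) :
    N.inSum (fun e => if e = e0 then c else 0) v = if e0.2 = v then c else 0 := by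
  unfold inSum
  rw [Finset.sum_ite_eq']
  simp [he]

theorem aux_outSum_single (N : FlowNetwork) (e0 : N.V × N.V) (he : e0 ∈ N.E) (c : ℝ) (v : N.V) :
    N.outSum (fun e => if e = e0 then c else 0) v = if e0.1 = v then c else 0 := by
  unfold outSum
  rw [Finset.sum_ite_eq']
  simp [he]

theorem aux_sum_in (N : FlowNetwork) (d : N.V × N.V → ℝ) :
    ∑ v, N.inSum d v = ∑ e ∈ N.E, d e := by
  unfold inSum
  exact Finset.sum_fiberwise N.E (fun e => e.2) d

theorem aux_sum_out (N : FlowNetwork) (d : N.V × N.V → ℝ) :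
    ∑ v, N.outSum d v = ∑ e ∈ N.E, d e := by
  unfold outSum
  exact Finset.sum_fiberwise N.E (fun e => e.1) d

/-- The artificial edge lies on no simple path ending in `t`. -/
theorem aux_ts_not_mem (N : FlowNetwork) (μ : N.V × N.V → ℝ) :
    (N.t, N.s) ∉ N.lambdaSigma μ := by
  intro h
  simp only [lambdaSigma, Set.mem_iUnion, lambdaSet, Set.mem_setOf_eq] at h
  obtain ⟨u, -, l, -, hnd, -, hlast, hmem⟩ := h
  obtain ⟨i, hi, hget⟩ := List.getElem_of_mem hmem
  have hlen : i < l.length ∧ i < l.tail.length := by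
    rw [List.length_zip] at hi
    exact lt_min_iff.1 hi
  have h2 : i + 1 < l.length := by
    have := hlen.2
    simp at this
    omega
  rw [List.getElem_zip] at hget
  have h1 : l[i] = N.t := congrArg Prod.fst hget
  rw [List.getLast?_eq_getElem?, List.getElem?_eq_some_iff] at hlast
  obtain ⟨hj, hlast⟩ := hlast
  have := (hnd.getElem_inj_iff (hi := hlen.1) (hj := hj)).1 (h1.trans hlast.symm)
  omega

/-- The deletion: a minimal part `d` of the flow `x` containing all the flow on `A`. -/
theorem aux_deletion (N : FlowNetwork) (x : N.V × N.V → ℝ) (hx : N.Feasible x)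
    (A : Finset (N.V × N.V)) (hA : A ⊆ N.E) :
    ∃ d : N.V × N.V → ℝ, (∀ e, 0 ≤ d e) ∧ (∀ e, d e ≤ x e) ∧ (∀ e ∈ A, d e = x e) ∧
      (∀ v, v ≠ N.s → N.inSum d v ≤ N.outSum d v) ∧ d (N.t, N.s) ≤ ∑ e ∈ A, x e := by
  obtain ⟨hx0, hxc, -⟩ := hx
  let K : Set (N.V × N.V → ℝ) := Set.Icc 0 x ∩
    ({d | ∀ e ∈ A, d e = x e} ∩ {d | ∀ v, v ≠ N.s → N.inSum d v ≤ N.outSum d v})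
  have hK : IsCompact K := by
    refine isCompact_Icc.inter_right (IsClosed.inter ?_ ?_)
    · simp only [Set.setOf_forall]
      exact isClosed_iInter fun e => isClosed_iInter fun _ =>
        isClosed_eq (by fun_prop) (by fun_prop)
    · simp only [Set.setOf_forall]
      refine isClosed_iInter fun e => isClosed_iInter fun _ => isClosed_le ?_ ?_
      · unfold inSum; fun_prop
      · unfold outSum; fun_prop
  have hne : K.Nonempty := ⟨x, ⟨fun e => hx0 e, le_rfl⟩, fun _ _ => rfl, fun v hv => (hxc v hv).le⟩
  obtain ⟨d, ⟨⟨hd0, hdx⟩, hdA, hdc⟩, hmin⟩ := hK.exists_isMinOn hne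
    (f := fun d => ∑ e ∈ N.E, d e) (by fun_prop)
  refine ⟨d, hd0, hdx, hdA, hdc, ?_⟩
  have hd0' : ∀ e, 0 ≤ d e := hd0
  -- the reduction step
  have key : ∀ e0 ∈ N.E, e0 ∉ A → ∀ c, 0 < c → c ≤ d e0 →
      (e0.1 ≠ N.s → c ≤ N.outSum d e0.1 - N.inSum d e0.1) → False := by
    intro e0 he0 hnA c hc hcd hcs
    have hmem : (fun e => d e - if e = e0 then c else 0) ∈ K := by
      refine ⟨⟨fun e => ?_, fun e => ?_⟩, fun e he => ?_, fun v hv => ?_⟩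
      · have := hd0' e
        dsimp
        split_ifs with h
        · subst h; linarith
        · linarith
      · have := hdx e
        dsimp
        split_ifs <;> linarith
      · have : e ≠ e0 := fun h => hnA (h ▸ he)
        simpa [this] using hdA e he
      · rw [aux_inSum_sub, aux_outSum_sub, aux_inSum_single N e0 he0, aux_outSum_single N e0 he0]
        have h1 := hdc v hv
        by_cases hv1 : e0.1 = v
        · subst hv1
          have := hcs hv
          split_ifs <;> linarith
        · split_ifs <;> linarith
    have := hmin hmem
    simp only [Set.mem_setOf_eq, Finset.sum_sub_distrib, Finset.sum_ite_eq', he0, if_true] at this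
    linarith
  -- bound on the flow out of each node
  have hAout : ∀ v, (∀ e ∈ N.E, e.1 = v → e ∉ A → d e = 0) →
      N.outSum d v ≤ ∑ e ∈ A.filter (fun e => e.1 = v), x e := by
    intro v h
    unfold outSum
    rw [← Finset.sum_subset (Finset.filter_subset_filter _ hA)]
    · exact Finset.sum_le_sum fun e _ => hdx e
    · intro e he hne'
      simp only [Finset.mem_filter] at he hne'
      exact h e he.1 he.2 fun h' => hne' ⟨h', he.2⟩
  have hb : ∀ v, N.outSum d v ≤ (if v = N.s then 0 else N.inSum d v) +
      ∑ e ∈ A.filter (fun e => e.1 = v), x e := by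
    intro v
    have hin : 0 ≤ N.inSum d v := Finset.sum_nonneg fun e _ => hd0' e
    have hAn : 0 ≤ ∑ e ∈ A.filter (fun e => e.1 = v), x e := Finset.sum_nonneg fun e _ => hx0 e
    by_cases hv : v = N.s
    · rw [if_pos hv, zero_add]
      refine hAout v fun e he hev heA => ?_
      by_contra hne'
      exact key e he heA (d e) (lt_of_le_of_ne (hd0' e) (Ne.symm hne')) le_rfl
        fun h => absurd (hev.trans hv) h
    · rw [if_neg hv]
      by_cases hz : ∀ e ∈ N.E, e.1 = v → e ∉ A → d e = 0
      · linarith [hAout v hz]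
      · push Not at hz
        obtain ⟨e, he, rfl, heA, hne'⟩ := hz
        have hpos := lt_of_le_of_ne (hd0' e) (Ne.symm hne')
        by_contra hcon
        exact key e he heA (min (d e) (N.outSum d e.1 - N.inSum d e.1))
          (lt_min hpos (by linarith)) (min_le_left _ _) fun _ => min_le_right _ _
  have hsum := Finset.sum_le_sum fun v (_ : v ∈ (Finset.univ : Finset N.V)) => hb v
  rw [Finset.sum_add_distrib, aux_sum_out, ← aux_sum_in,
    Finset.sum_fiberwise A (fun e => e.1) x] at hsum
  have hsplit : ∑ v, (if v = N.s then 0 else N.inSum d v) = ∑ v, N.inSum d v - N.inSum d N.s := by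
    have : ∀ v, (if v = N.s then 0 else N.inSum d v) =
        N.inSum d v - if v = N.s then N.inSum d v else 0 := by
      intro v; split_ifs <;> simp
    simp [this, Finset.sum_sub_distrib]
  have hts : d (N.t, N.s) ≤ N.inSum d N.s :=
    Finset.single_le_sum (f := d) (fun e _ => hd0' e) (by simp [N.ts_mem])
  linarith

/-- The loss from a budget-`Γ` attack is bounded by the total flow on the attacked
edges, which is in turn bounded by `Γ` times the maximum edge capacity. -/
theorem attack_loss_budget_bound (N : FlowNetwork) (x : N.V × N.V → ℝ)
    (hx : N.Feasible x) (Γ : ℕ) (μ : N.V × N.V → ℝ)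
    (hμ01 : ∀ e, μ e = 0 ∨ μ e = 1) (hsupp : ∀ e, e ∉ N.E → μ e = 0)
    (hμts : μ (N.t, N.s) = 0) (hbud : ∑ e ∈ N.E, μ e ≤ (Γ : ℝ)) :
    N.MVal x (fun _ => 0) - ∑ e ∈ N.E.filter (fun e => μ e = 1), x e ≤ N.MVal x μ ∧
    N.MVal x (fun _ => 0) -
        (Γ : ℝ) * sSup (N.U '' {e : N.V × N.V | e ∈ N.E ∧ e ≠ (N.t, N.s)}) ≤
      N.MVal x (fun _ => 0) - ∑ e ∈ N.E.filter (fun e => μ e = 1), x e := by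
  obtain ⟨d, hd0, hdx, hdA, hdc, hdts⟩ := aux_deletion N x hx
    (N.E.filter (fun e => μ e = 1)) (Finset.filter_subset _ _)
  obtain ⟨hx0, hxc, hxU⟩ := hx
  constructor
  · have hup : ∀ ν : N.V × N.V → ℝ, ∀ r ∈ N.MSet x ν,
        r ≤ x (N.t, N.s) - ∑ e ∈ N.E, N.p e * x e := by
      rintro ν r ⟨y, z, -, hz, -, hyx, -, -, rfl⟩
      have h1 := hyx _ N.ts_mem (aux_ts_not_mem N ν)
      have h2 : 0 ≤ ∑ e ∈ N.E, N.p e * z e :=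
        Finset.sum_nonneg fun e he => mul_nonneg (N.p_nonneg e) (hz e he)
      linarith
    have hempty : ∀ e, e ∉ N.lambdaSigma (fun _ => 0) := by
      intro e he
      simp [lambdaSigma, sigmaSet] at he
    have h0 : N.MVal x (fun _ => 0) ≤ x (N.t, N.s) - ∑ e ∈ N.E, N.p e * x e := by
      refine csSup_le ⟨_, fun _ => 0, fun _ => 0, fun _ _ => le_rfl, fun _ _ => le_rfl, ?_,
        fun e _ _ => hx0 e, fun e _ he => absurd he (hempty e),
        fun e _ he => absurd he (hempty e), rfl⟩ (hup _)
      intro v _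
      simp [inSum, outSum]
    have h1 : x (N.t, N.s) - d (N.t, N.s) - ∑ e ∈ N.E, N.p e * x e ≤ N.MVal x μ := by
      refine le_csSup ⟨_, hup μ⟩ ⟨fun e => x e - d e, fun _ => 0, fun e _ => ?_,
        fun _ _ => le_rfl, fun v hv => ?_, fun e _ _ => ?_, fun e he heL => ?_,
        fun e _ _ => ?_, by simp⟩
      · linarith [hdx e]
      · rw [aux_inSum_sub, aux_outSum_sub]
        linarith [hdc v hv, hxc v hv]
      · linarith [hd0 e]
      · rcases hμ01 e with h | h
        · have hne : e ≠ (N.t, N.s) := fun h' => aux_ts_not_mem N μ (h' ▸ heL)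
          rw [h]
          linarith [hxU e he hne, hd0 e]
        · have h3 := hdA e (by simp [he, h])
          rw [h]
          dsimp only
          rw [h3]
          simp
      · linarith [hd0 e]
    linarith
  · apply sub_le_sub_left
    set S := sSup (N.U '' {e : N.V × N.V | e ∈ N.E ∧ e ≠ (N.t, N.s)}) with hS
    have hS0 : 0 ≤ S := Real.sSup_nonneg (by rintro _ ⟨e, -, rfl⟩; exact N.U_nonneg e)
    have hbdd : BddAbove (N.U '' {e : N.V × N.V | e ∈ N.E ∧ e ≠ (N.t, N.s)}) :=
      ((Set.toFinite _).image _).bddAbove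
    have hcard : ((N.E.filter (fun e => μ e = 1)).card : ℝ) ≤ Γ := by
      refine le_trans (le_of_eq ?_) hbud
      rw [Finset.card_filter, Nat.cast_sum]
      refine Finset.sum_congr rfl fun e _ => ?_
      rcases hμ01 e with h | h <;> simp [h]
    calc ∑ e ∈ N.E.filter (fun e => μ e = 1), x e
        ≤ ∑ e ∈ N.E.filter (fun e => μ e = 1), S := by
          refine Finset.sum_le_sum fun e he => ?_
          simp only [Finset.mem_filter] at he
          have hne : e ≠ (N.t, N.s) := by
            intro h
            rw [h, hμts] at he
            exact zero_ne_one he.2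
          exact (hxU e he.1 hne).trans (le_csSup hbdd ⟨e, ⟨he.1, hne⟩, rfl⟩)
      _ = ((N.E.filter (fun e => μ e = 1)).card : ℝ) * S := by simp
      _ ≤ Γ * S := mul_le_mul_of_nonneg_right hcard hS0

end FlowNetwork
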